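/- For all real numbers α, β, γ, δ, with σ = (α+β+γ+δ)/2 and ᾱ = σ−α, β̄ = σ−β, γ̄ = σ−γ, δ̄ = σ−δ, the coefficients c₂₂ = sin δ̄ · sin(σ−β−δ), c₂₀ = sin ᾱ · sin(σ−β−α), c₀₂ = sin γ̄ · sin(σ−β−γ), c₀₀ = sin β̄ · sin σ satisfy the identity c₂₂·c₀₀ − c₂₀·c₀₂ = sin α · sin γ · (sin β̄ · sin δ̄ − sin ᾱ · sin γ̄). -/

import Mathlib

open Real

/-!
Grouping by `sin βb * sin δb` and `sin αb * sin γb`, the identity reads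
`sin βb sin δb (sin σ sin (σ-β-δ) - sin α sin γ)
  = sin αb sin γb (sin (σ-β-α) sin (σ-β-γ) - sin α sin γ)`.
By the product-to-sum formula, the first bracket is `-sin αb sin γb` and the second is
`-sin βb sin δb`, so both sides equal `-sin αb sin βb sin γb sin δb`.
-/

lemma sin_mul_sin_eq (x y : ℝ) : sin x * sin y = (cos (x - y) - cos (x + y)) / 2 := by
  rw [cos_sub, cos_add]; ring

theorem determinant_identity (α β γ δ σ αb βb γb δb : ℝ)
    (hσ : σ = (α + β + γ + δ) / 2)
    (hα : αb = σ - α) (hβ : βb = σ - β) (hγ : γb = σ - γ) (hδ : δb = σ - δ) :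
    (sin δb * sin (σ - β - δ)) * (sin βb * sin σ) -
        (sin αb * sin (σ - β - α)) * (sin γb * sin (σ - β - γ)) =
      sin α * sin γ * (sin βb * sin δb - sin αb * sin γb) := by
  have h1 : sin σ * sin (σ - β - δ) - sin α * sin γ = -(sin αb * sin γb) := by
    simp only [sin_mul_sin_eq]
    rw [show σ - (σ - β - δ) = β + δ by ring,
      show σ + (σ - β - δ) = α + γ by linarith,
      show αb - γb = -(α - γ) by linarith, show αb + γb = β + δ by linarith, cos_neg]
    ring
  have h2 : sin (σ - β - α) * sin (σ - β - γ) - sin α * sin γ = -(sin βb * sin δb) := by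
    simp only [sin_mul_sin_eq]
    rw [show σ - β - α - (σ - β - γ) = -(α - γ) by ring,
      show σ - β - α + (σ - β - γ) = δ - β by linarith,
      show βb - δb = δ - β by linarith, show βb + δb = α + γ by linarith, cos_neg]
    ring
  linear_combination sin βb * sin δb * h1 - sin αb * sin γb * h2
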